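/- For three thieves (q = 3): given any necklace with m colors, and for each color j with 3 ∤ a_j any prescribed choice of the thief (if a_j ≡ 1 mod 3) or the two thieves (if a_j ≡ 2 mod 3) who receive ⌈a_j/3⌉ beads of color j, there exists a fair 3-splitting with at most 2m cuts realizing the prescription. -/

import Mathlib

namespace Necklace

section Coboundary

variable {α R : Type*} [CommRing R]

/-- The alternating sum of the values of `W` on the lists obtained from the argument by deleting
one entry satisfying `p`. -/
def cob (p : α → Bool) : List α → (List α → R) → R
  | [], _ => 0
  | a :: u, W => (if p a then W u else 0) - cob p u fun v => W (a :: v)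

theorem cob_add (p : α → Bool) (u : List α) (V W : List α → R) :
    cob p u (fun v => V v + W v) = cob p u V + cob p u W := by
  induction u generalizing V W with
  | nil => simp [cob]
  | cons a u ih => simp only [cob, ih]; split_ifs <;> ring

theorem cob_sub (p : α → Bool) (u : List α) (V W : List α → R) :
    cob p u (fun v => V v - W v) = cob p u V - cob p u W := by
  induction u generalizing V W with
  | nil => simp [cob]
  | cons a u ih => simp only [cob, ih]; split_ifs <;> ring

theorem cob_zero (p : α → Bool) (u : List α) : cob p u (fun _ => (0 : R)) = 0 := by
  simpa using cob_sub p u (fun _ => (0 : R)) fun _ => 0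

theorem cob_neg (p : α → Bool) (u : List α) (W : List α → R) :
    cob p u (fun v => -W v) = -cob p u W := by
  simpa [cob_zero] using cob_sub p u (fun _ => 0) W

theorem cob_cob (p : α → Bool) (u : List α) (W : List α → R) :
    cob p u (fun v => cob p v W) = 0 := by
  induction u generalizing W with
  | nil => rfl
  | cons a u ih =>
    simp only [cob, cob_sub, ih]
    split_ifs <;> simp [cob_zero]

theorem cob_map (p : α → Bool) (r : α → α) (hr : ∀ a, p (r a) = p a) (u : List α)
    (W : List α → R) : cob p (u.map r) W = cob p u fun v => W (v.map r) := by
  induction u generalizing W with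
  | nil => rfl
  | cons a u ih => simp [cob, ih, hr]

theorem cob_congr (p : α → Bool) (u : List α) (V W : List α → R)
    (h : ∀ l a r, p a → u = l ++ a :: r → V (l ++ r) = W (l ++ r)) :
    cob p u V = cob p u W := by
  induction u generalizing V W with
  | nil => rfl
  | cons a u ih =>
    simp only [cob]
    rw [ih (fun v => V (a :: v)) (fun v => W (a :: v))]
    · split_ifs with ha
      · rw [show V u = W u from h [] a u ha rfl]
      · rfl
    · rintro l b r hb rfl
      exact h (a :: l) b r hb rfl

end Coboundary

section Jumps

variable {α : Type*} [DecidableEq α]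

/-- The number of pairs of distinct consecutive entries of a list. -/
def jumps : List α → ℕ
  | [] => 0
  | [_] => 0
  | a :: b :: l => (if a = b then 0 else 1) + jumps (b :: l)

theorem jumps_cons_le (a b : α) (l : List α) : jumps (a :: l) ≤ jumps (a :: b :: l) := by
  cases l with
  | nil => simp [jumps]
  | cons c l =>
    simp only [jumps]
    split_ifs <;> first | omega | simp_all

theorem jumps_le_cons (a : α) (l : List α) : jumps l ≤ jumps (a :: l) := by
  cases l <;> simp [jumps]

theorem jumps_cons_le_of_sublist {l₁ l₂ : List α} (h : l₁.Sublist l₂) (a : α) :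
    jumps (a :: l₁) ≤ jumps (a :: l₂) := by
  induction h generalizing a with
  | slnil => exact le_rfl
  | cons b _ ih => exact (ih a).trans (jumps_cons_le a b _)
  | cons_cons b _ ih =>
    simp only [jumps]
    exact Nat.add_le_add_left (ih b) _

theorem jumps_le_of_sublist {l₁ l₂ : List α} (h : l₁.Sublist l₂) : jumps l₁ ≤ jumps l₂ := by
  induction h with
  | slnil => exact le_rfl
  | cons b _ ih => exact ih.trans (jumps_le_cons b _)
  | cons_cons b h _ => exact jumps_cons_le_of_sublist h b

theorem jumps_map (r : α → α) (hr : Function.Injective r) (l : List α) :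
    jumps (l.map r) = jumps l := by
  induction l with
  | nil => rfl
  | cons a l ih => cases l <;> simp_all [jumps, hr.eq_iff]

theorem jumps_lt_length (l : List α) : jumps l ≤ l.length - 1 := by
  induction l with
  | nil => simp [jumps]
  | cons a l ih =>
    cases l with
    | nil => simp [jumps]
    | cons b l =>
      simp only [jumps, List.length_cons] at ih ⊢
      split_ifs <;> omega

end Jumps

section Resolution

variable {R : Type*} [CommRing R]

/-- On cochains on words in `ℤ/3`, this is `g - 1` for even `k` and `1 + g + g ^ 2` for odd `k`,
where `g` is the translation by `1`. -/
def theta (k : ℕ) (V : List (Fin 3) → R) (v : List (Fin 3)) : R :=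
  if Even k then V (v.map (· + 1)) - V v
  else V v + V (v.map (· + 1)) + V ((v.map (· + 1)).map (· + 1))

/-- The evaluation of cochains on the `k`-th chain of a resolution of `ℤ/3`. -/
def barEval : ℕ → (List (Fin 3) → R) → R
  | 0, V => V [0]
  | k + 1, V => barEval k (theta k fun v => V (0 :: v))

theorem theta_add (k : ℕ) (V W : List (Fin 3) → R) :
    theta k (fun v => V v + W v) = fun v => theta k V v + theta k W v := by
  funext v; simp only [theta]; split_ifs <;> ring

theorem theta_sub (k : ℕ) (V W : List (Fin 3) → R) :
    theta k (fun v => V v - W v) = fun v => theta k V v - theta k W v := by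
  funext v; simp only [theta]; split_ifs <;> ring

theorem barEval_add (k : ℕ) (V W : List (Fin 3) → R) :
    barEval k (fun v => V v + W v) = barEval k V + barEval k W := by
  induction k generalizing V W with
  | zero => rfl
  | succ k ih => simp only [barEval, theta_add, ih]

theorem barEval_sub (k : ℕ) (V W : List (Fin 3) → R) :
    barEval k (fun v => V v - W v) = barEval k V - barEval k W := by
  induction k generalizing V W with
  | zero => rfl
  | succ k ih => simp only [barEval, theta_sub, ih]

theorem barEval_zero (k : ℕ) : barEval k (fun _ => (0 : R)) = 0 := by
  simpa using barEval_sub k (fun _ => (0 : R)) fun _ => 0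

theorem map_rot_three (v : List (Fin 3)) :
    ((v.map (· + 1)).map (· + 1)).map (· + 1) = v := by
  have h : ∀ t : Fin 3, t + 1 + 1 + 1 = t := by decide
  simp [Function.comp_def, h]

theorem theta_theta (k : ℕ) (V : List (Fin 3) → R) :
    theta k (theta (k + 1) V) = fun _ => 0 := by
  funext v
  simp only [theta, Nat.even_add_one]
  split_ifs <;> simp only [map_rot_three] <;> ring

theorem theta_cob (k : ℕ) (V : List (Fin 3) → R) :
    theta k (fun v => cob (fun _ => true) v V) =
      fun v => cob (fun _ => true) v (theta k V) := by
  funext v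
  unfold theta
  split_ifs
  · simp only [cob_sub, ← cob_map (fun _ => true) (· + (1 : Fin 3)) (fun _ => rfl)]
  · simp only [cob_add, cob_map (fun _ => true) (· + (1 : Fin 3)) (fun _ => rfl)]

theorem barEval_congr (k : ℕ) (V W : List (Fin 3) → R)
    (h : ∀ v, v.length = k + 1 → V v = W v) : barEval k V = barEval k W := by
  induction k generalizing V W with
  | zero => exact h _ rfl
  | succ k ih =>
    refine ih _ _ fun v hv => ?_
    simp only [theta]
    rw [h (0 :: v) (by simp [hv]), h (0 :: v.map (· + 1)) (by simp [hv]),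
      h (0 :: (v.map (· + 1)).map (· + 1)) (by simp [hv])]

theorem barEval_cob (k : ℕ) (V : List (Fin 3) → R) :
    barEval (k + 1) (fun v => cob (fun _ => true) v V) = barEval k (theta k V) := by
  induction k generalizing V with
  | zero => simp [barEval, cob, theta]
  | succ k ih =>
    rw [barEval]
    simp only [cob, theta_sub, barEval_sub, theta_cob, ih, theta_theta, barEval_zero]
    simp

end Resolution

section Subdivision

variable {R : Type*} [CommRing R]

/-- The pullback of a cochain along the iterated Alexander-Whitney diagonal: the sum of the values
of `W` over all words obtained from the argument by cutting it `n` times at an entry, which is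
repeated on both sides of the separator `none`. -/
def awEval : ℕ → List (Fin 3) → (List (Option (Fin 3)) → R) → R
  | _, [], _ => 0
  | 0, [t], W => W [some t]
  | n + 1, [t], W => awEval n [t] fun u => W (some t :: none :: u)
  | 0, t :: s :: v, W => awEval 0 (s :: v) fun u => W (some t :: u)
  | n + 1, t :: s :: v, W => (awEval n (t :: s :: v) fun u => W (some t :: none :: u)) +
      awEval (n + 1) (s :: v) fun u => W (some t :: u)
termination_by n v => n + v.length

theorem awEval_add (n : ℕ) (v : List (Fin 3)) (V W : List (Option (Fin 3)) → R) :
    awEval n v (fun u => V u + W u) = awEval n v V + awEval n v W := by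
  fun_induction awEval n v V generalizing W with
  | case1 => simp [awEval]
  | case2 => simp [awEval]
  | case3 n t V ih => simp only [awEval, ih]
  | case4 t s v V ih => simp only [awEval, ih]
  | case5 n t s v V ih₁ ih₂ => simp only [awEval, ih₁, ih₂]; ring

theorem awEval_sub (n : ℕ) (v : List (Fin 3)) (V W : List (Option (Fin 3)) → R) :
    awEval n v (fun u => V u - W u) = awEval n v V - awEval n v W := by
  fun_induction awEval n v V generalizing W with
  | case1 => simp [awEval]
  | case2 => simp [awEval]
  | case3 n t V ih => simp only [awEval, ih]
  | case4 t s v V ih => simp only [awEval, ih]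
  | case5 n t s v V ih₁ ih₂ => simp only [awEval, ih₁, ih₂]; ring

theorem awEval_zero (n : ℕ) (v : List (Fin 3)) : awEval n v (fun _ => (0 : R)) = 0 := by
  simpa using awEval_sub n v (fun _ => (0 : R)) fun _ => 0

theorem awEval_map (n : ℕ) (v : List (Fin 3)) (W : List (Option (Fin 3)) → R) :
    awEval n (v.map (· + 1)) W =
      awEval n v fun u => W (u.map (Option.map (· + 1))) := by
  generalize hV : (fun u : List (Option (Fin 3)) => W (u.map (Option.map (· + 1)))) = V
  fun_induction awEval n v V generalizing W with
  | case1 => simp [awEval]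
  | case2 => subst hV; simp [awEval]
  | case3 n t V ih =>
    subst hV
    simp only [List.map_cons, List.map_nil, awEval] at ih ⊢
    exact ih _ rfl
  | case4 t s v V ih =>
    subst hV
    simp only [List.map_cons, awEval] at ih ⊢
    exact ih _ rfl
  | case5 n t s v V ih₁ ih₂ =>
    subst hV
    simp only [List.map_cons, awEval] at ih₁ ih₂ ⊢
    rw [ih₁ _ rfl, ih₂ _ rfl]

theorem awEval_zero_cons (t : Fin 3) (v : List (Fin 3)) (W : List (Option (Fin 3)) → R) :
    awEval 0 (t :: v) W =
      awEval 0 v (fun u => W (some t :: u)) + if v = [] then W [some t] else 0 := by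
  cases v <;> simp [awEval]

theorem awEval_succ_cons (n : ℕ) (t : Fin 3) (v : List (Fin 3))
    (W : List (Option (Fin 3)) → R) :
    awEval (n + 1) (t :: v) W = (awEval n (t :: v) fun u => W (some t :: none :: u)) +
      awEval (n + 1) v fun u => W (some t :: u) := by
  cases v
  · simp [awEval]
  · rw [awEval]

theorem cob_ite_eq_nil {α : Type*} (u : List α) (x : R) :
    cob (fun _ => true) u (fun v => if v = [] then x else 0) =
      if u.length = 1 then x else 0 := by
  cases u with
  | nil => simp [cob]
  | cons a u => cases u <;> simp [cob, cob_zero]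

/-- The Alexander-Whitney diagonal is a chain map. -/
theorem awEval_cob (n : ℕ) (v : List (Fin 3)) (hv : v ≠ []) (W : List (Option (Fin 3)) → R)
    (h₁ : ∀ l r, W (l ++ none :: none :: r) = 0) (h₂ : ∀ l, W (l ++ [none]) = 0) :
    awEval n v (fun u => cob Option.isSome u W) =
      cob (fun _ => true) v (fun v => awEval n v W) +
      (if n = 0 then (if v.length = 1 then W [] else 0)
        else awEval (n - 1) v fun u => W (none :: u)) := by
  fun_induction awEval n v W with
  | case1 => exact absurd rfl hv
  | case2 => simp [awEval, cob]
  | case3 n t W ih =>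
    have := ih (by simp) (fun l r => h₁ (some t :: none :: l) r) (fun l => h₂ (some t :: none :: l))
    have h₃ : (awEval (n - 1) [t] fun u => W (some t :: none :: none :: u)) = 0 := by
      simp only [show ∀ u, W (some t :: none :: none :: u) = 0 from h₁ [some t], awEval_zero]
    have h₄ : W [some t, none] = 0 := h₂ [some t]
    simp only [h₃, h₄] at this
    simp only [awEval, cob, awEval_sub, this]
    simp [awEval_zero]
  | case4 t s v W ih =>
    have := ih (by simp) (fun l r => h₁ (some t :: l) r) (fun l => h₂ (some t :: l))
    have hw : s :: v ≠ [] := by simp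
    generalize s :: v = w at this hw
    rw [awEval_zero_cons, if_neg hw, cob]
    simp only [awEval_zero_cons t, cob, awEval_sub, cob_add, cob_ite_eq_nil, this]
    simp [hw]
  | case5 n t s v W ih₁ ih₂ =>
    have i₁ := ih₁ (by simp) (fun l r => h₁ (some t :: none :: l) r)
      (fun l => h₂ (some t :: none :: l))
    have i₂ := ih₂ (by simp) (fun l r => h₁ (some t :: l) r) (fun l => h₂ (some t :: l))
    have h₃ : (awEval (n - 1) (t :: s :: v) fun u => W (some t :: none :: none :: u)) = 0 := by
      simp only [show ∀ u, W (some t :: none :: none :: u) = 0 from h₁ [some t], awEval_zero]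
    have hw : s :: v ≠ [] := by simp
    simp only [h₃] at i₁
    generalize s :: v = w at i₁ i₂ hw
    rw [awEval_succ_cons, cob]
    simp only [awEval_succ_cons n t, cob, awEval_sub, cob_add, i₁, i₂]
    simp [hw, awEval_zero]
    ring

end Subdivision

section Words

/-- The set of letters in the `i`-th block of a word, where blocks are separated by `none`. -/
def block : List (Option (Fin 3)) → ℕ → Finset (Fin 3)
  | [], _ => ∅
  | some t :: u, 0 => insert t (block u 0)
  | some _ :: u, i + 1 => block u (i + 1)
  | none :: _, 0 => ∅
  | none :: u, i + 1 => block u i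

/-- The translation of all letters of a word by `1`. -/
def rot (u : List (Option (Fin 3))) : List (Option (Fin 3)) := u.map (Option.map (· + 1))

/-- Words with `n + 1` nonempty blocks and at most `d` changes of letters. -/
structure Good (n d : ℕ) (u : List (Option (Fin 3))) : Prop where
  count_eq : u.count none = n
  nonempty : ∀ i ≤ n, (block u i).Nonempty
  jumps_le : jumps u.reduceOption ≤ d

theorem block_subset (l r : List (Option (Fin 3))) (t : Fin 3) (i : ℕ) :
    block (l ++ r) i ⊆ block (l ++ some t :: r) i := by
  induction l generalizing i with
  | nil => cases i <;> simp [block]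
  | cons a l ih =>
    cases a with
    | none => cases i <;> simp [block, ih]
    | some s =>
      cases i with
      | zero => simpa [block] using Finset.insert_subset_insert s (ih 0)
      | succ i => simpa [block] using ih (i + 1)

theorem block_none_none (l r : List (Option (Fin 3))) :
    block (l ++ none :: none :: r) (l.count none + 1) = ∅ := by
  induction l with
  | nil => simp [block]
  | cons a l ih => cases a <;> simp [block, ih]

theorem block_none (l : List (Option (Fin 3))) :
    block (l ++ [none]) (l.count none + 1) = ∅ := by
  induction l with
  | nil => simp [block]
  | cons a l ih => cases a <;> simp [block, ih]

theorem rot_rot_rot (u : List (Option (Fin 3))) : rot (rot (rot u)) = u := by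
  have h : ∀ a : Option (Fin 3),
      ((a.map (· + 1)).map (· + 1)).map (· + 1) = a := by decide
  simp only [rot, List.map_map]
  conv_rhs => rw [← List.map_id u]
  exact List.map_congr_left fun a _ => h a

theorem add_one_mem_block_rot (u : List (Option (Fin 3))) (i : ℕ) (t : Fin 3) :
    t + 1 ∈ block (rot u) i ↔ t ∈ block u i := by
  induction u generalizing i with
  | nil => simp [rot, block]
  | cons a u ih =>
    simp only [rot] at ih
    cases a <;> cases i <;> simp [rot, block, ih]

theorem reduceOption_rot (u : List (Option (Fin 3))) :
    (rot u).reduceOption = u.reduceOption.map (· + 1) := by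
  induction u with
  | nil => rfl
  | cons a u ih => cases a <;> simp_all [rot]

theorem count_none_rot (u : List (Option (Fin 3))) : (rot u).count none = u.count none := by
  induction u with
  | nil => rfl
  | cons a u ih => cases a <;> simp_all [rot]

theorem Good.rot {n d : ℕ} {u : List (Option (Fin 3))} (h : Good n d u) : Good n d (rot u) where
  count_eq := by rw [count_none_rot, h.count_eq]
  nonempty i hi := by
    obtain ⟨t, ht⟩ := h.nonempty i hi
    exact ⟨t + 1, (add_one_mem_block_rot u i t).2 ht⟩
  jumps_le := by
    rw [reduceOption_rot, jumps_map _ (add_left_injective 1)]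
    exact h.jumps_le

theorem good_rot_iff {n d : ℕ} {u : List (Option (Fin 3))} : Good n d (rot u) ↔ Good n d u :=
  ⟨fun h => by simpa [rot_rot_rot] using h.rot.rot, Good.rot⟩

theorem jumps_delete_le (l r : List (Option (Fin 3))) (t : Fin 3) :
    jumps (l ++ r).reduceOption ≤ jumps (l ++ some t :: r).reduceOption := by
  refine jumps_le_of_sublist (List.Sublist.filterMap _ ?_)
  exact (List.sublist_cons_self _ _).append_left l

/-- Deleting a letter from a good word yields a good word or a word all of whose faces are bad. -/
theorem Good.of_delete_delete {n d : ℕ} {l r l' r' : List (Option (Fin 3))} {t t' : Fin 3}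
    (h : Good n d (l ++ some t :: r)) (h' : Good n d (l' ++ r'))
    (e : l ++ r = l' ++ some t' :: r') : Good n d (l ++ r) where
  count_eq := by simpa using h.count_eq
  nonempty i hi := by
    rw [e]
    exact (h'.nonempty i hi).mono (block_subset l' r' t' i)
  jumps_le := (jumps_delete_le l r t).trans h.jumps_le

theorem awEval_congr (n : ℕ) (v : List (Fin 3)) {R : Type*} [CommRing R]
    (V W : List (Option (Fin 3)) → R)
    (h : ∀ u, Good n (jumps v) u → u.reduceOption.head? = v.head? → V u = W u) :
    awEval n v V = awEval n v W := by
  have key : ∀ {n : ℕ} {t : Fin 3} {v : List (Fin 3)} {u : List (Option (Fin 3))},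
      Good n (jumps (t :: v)) u → u.reduceOption.head? = (t :: v).head? →
      Good (n + 1) (jumps (t :: v)) (some t :: none :: u) := by
    intro n t v u hu hh
    refine ⟨by simpa using hu.count_eq, fun i hi => ?_, ?_⟩
    · cases i with
      | zero => simp [block]
      | succ i => simpa [block] using hu.nonempty i (by omega)
    · have := hu.jumps_le
      cases hr : u.reduceOption <;> simp_all [jumps]
  have key' : ∀ {n : ℕ} {t s : Fin 3} {v : List (Fin 3)} {u : List (Option (Fin 3))},
      Good n (jumps (s :: v)) u → u.reduceOption.head? = (s :: v).head? →
      Good n (jumps (t :: s :: v)) (some t :: u) := by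
    intro n t s v u hu hh
    refine ⟨by simpa using hu.count_eq, fun i hi => ?_, ?_⟩
    · cases i with
      | zero => simp [block]
      | succ i => simpa [block] using hu.nonempty (i + 1) hi
    · have := hu.jumps_le
      cases hr : u.reduceOption <;> simp_all [jumps]
  fun_induction awEval n v V generalizing W with
  | case1 => simp [awEval]
  | case2 =>
    simp only [awEval]
    refine h _ ⟨by simp, fun i hi => ?_, by simp [jumps]⟩ (by simp)
    obtain rfl : i = 0 := by omega
    simp [block]
  | case3 n t V ih =>
    simp only [awEval]
    exact ih _ fun u hu hh => h _ (key hu hh) (by simp)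
  | case4 t s v V ih =>
    simp only [awEval]
    exact ih _ fun u hu hh => h _ (key' hu hh) (by simp)
  | case5 n t s v V ih₁ ih₂ =>
    simp only [awEval]
    rw [ih₁ (fun u => W (some t :: none :: u)) fun u hu hh => h _ (key hu hh) (by simp),
      ih₂ (fun u => W (some t :: u)) fun u hu hh => h _ (key' hu hh) (by simp)]

/-- The evaluation of cochains on the subdivision of the `k`-th chain of the resolution. -/
def eval (n k : ℕ) (W : List (Option (Fin 3)) → ZMod 3) : ZMod 3 :=
  barEval k fun v => awEval n v W

theorem eval_add (n k : ℕ) (V W : List (Option (Fin 3)) → ZMod 3) :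
    eval n k (fun u => V u + W u) = eval n k V + eval n k W := by
  simp only [eval, awEval_add, barEval_add]

theorem eval_sub (n k : ℕ) (V W : List (Option (Fin 3)) → ZMod 3) :
    eval n k (fun u => V u - W u) = eval n k V - eval n k W := by
  simp only [eval, awEval_sub, barEval_sub]

theorem eval_congr (n k d : ℕ) (hk : k ≤ d) (V W : List (Option (Fin 3)) → ZMod 3)
    (h : ∀ u, Good n d u → V u = W u) : eval n k V = eval n k W := by
  refine barEval_congr _ _ _ fun v hv => awEval_congr n v V W fun u hu _ => h u ?_
  have := jumps_lt_length v
  exact ⟨hu.count_eq, hu.nonempty, hu.jumps_le.trans (by omega)⟩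

theorem eval_cob (n d k : ℕ) (W : List (Option (Fin 3)) → ZMod 3)
    (hW : ∀ u, ¬ Good n d u → W u = 0) :
    eval n (k + 1) (fun u => cob Option.isSome u W) =
      if Even k then eval n k (fun u => W (rot u)) - eval n k W
      else eval n k W + eval n k (fun u => W (rot u)) + eval n k (fun u => W (rot (rot u))) := by
  have h₁ : ∀ l r, W (l ++ none :: none :: r) = 0 := fun l r => hW _ fun h => by
    have hc := h.count_eq
    simp only [List.count_append, List.count_cons_self] at hc
    have := h.nonempty (l.count none + 1) (by omega)
    simp [block_none_none] at this
  have h₂ : ∀ l, W (l ++ [none]) = 0 := fun l => hW _ fun h => by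
    have hc := h.count_eq
    simp only [List.count_append, List.count_cons_self] at hc
    have := h.nonempty (l.count none + 1) (by omega)
    simp [block_none] at this
  have h₃ : ∀ u, W (none :: u) = 0 := fun u => hW _ fun h => by
    simpa [block] using h.nonempty 0 (by omega)
  have h₄ : W [] = 0 := hW _ fun h => by
    simpa [block] using h.nonempty 0 (by omega)
  have key : (fun v => awEval n v fun u => cob Option.isSome u W) =
      fun v => cob (fun _ => true) v fun v => awEval n v W := by
    funext v
    by_cases hv : v = []
    · subst hv; simp [awEval, cob]
    · rw [awEval_cob n v hv W h₁ h₂]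
      simp [h₃, h₄, awEval_zero]
  rw [eval, key, barEval_cob]
  unfold theta
  split_ifs
  · simp only [barEval_sub, awEval_map]; rfl
  · simp only [barEval_add, awEval_map]; rfl

end Words

section Obstruction

open Classical in
/-- The coboundary of a cochain, restricted to good words. -/
noncomputable def coboundary (n d : ℕ) (W : List (Option (Fin 3)) → ZMod 3)
    (u : List (Option (Fin 3))) : ZMod 3 :=
  if Good n d u then cob Option.isSome u W else 0

theorem cob_coboundary {n d : ℕ} {W : List (Option (Fin 3)) → ZMod 3}
    (hW : ∀ u, ¬ Good n d u → W u = 0) {u : List (Option (Fin 3))} (hu : Good n d u) :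
    cob Option.isSome u (coboundary n d W) = 0 := by
  rw [← cob_cob Option.isSome u W]
  refine cob_congr _ _ _ _ fun l a r ha e => ?_
  obtain ⟨t, rfl⟩ := Option.isSome_iff_exists.1 ha
  rw [coboundary]
  split_ifs with hg
  · rfl
  · rw [← cob_zero Option.isSome (l ++ r)]
    refine cob_congr _ _ _ _ fun l' a' r' ha' e' => ?_
    obtain ⟨t', rfl⟩ := Option.isSome_iff_exists.1 ha'
    exact (hW _ fun h => hg (Good.of_delete_delete (e ▸ hu) h e')).symm

theorem coboundary_rot (n d : ℕ) (W : List (Option (Fin 3)) → ZMod 3)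
    (u : List (Option (Fin 3))) :
    coboundary n d W (rot u) = coboundary n d (fun v => W (rot v)) u := by
  have h : cob Option.isSome (rot u) W = cob Option.isSome u fun v => W (rot v) :=
    cob_map _ _ (by simp) u W
  by_cases hu : Good n d u <;> simp [coboundary, good_rot_iff, hu, h]

theorem eval_coboundary {n d k : ℕ} (hk : k + 1 ≤ d) {W : List (Option (Fin 3)) → ZMod 3}
    (hW : ∀ u, ¬ Good n d u → W u = 0) :
    eval n (k + 1) (coboundary n d W) =
      if Even k then eval n k (fun u => W (rot u)) - eval n k W
      else eval n k W + eval n k (fun u => W (rot u)) + eval n k (fun u => W (rot (rot u))) := by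
  rw [← eval_cob n d k W hW]
  exact eval_congr n (k + 1) d hk _ _ fun u hu => by simp [coboundary, hu]

/-- The indicator of the words all of whose blocks consist of one letter. -/
def augmentation : List (Option (Fin 3)) → ZMod 3
  | [some _] => 1
  | some _ :: none :: u => augmentation u
  | _ => 0

theorem augmentation_rot (u : List (Option (Fin 3))) :
    augmentation (rot u) = augmentation u := by
  fun_induction augmentation u with
  | case1 => rfl
  | case2 _ _ ih => simpa [rot, augmentation] using ih
  | case3 u h₁ h₂ =>
    rcases u with - | ⟨- | a, - | ⟨- | b, u⟩⟩ <;> simp_all [rot, augmentation]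

theorem augmentation_cons (s t : Fin 3) (u : List (Option (Fin 3))) :
    augmentation (some s :: u) = augmentation (some t :: u) := by
  rcases u with - | ⟨- | a, u⟩ <;> simp [augmentation]

theorem cob_augmentation (u : List (Option (Fin 3))) :
    cob Option.isSome u augmentation = 0 := by
  induction h : u.length using Nat.strong_induction_on generalizing u with
  | _ k ih =>
    rcases u with - | ⟨- | a, - | ⟨- | b, u⟩⟩ <;> simp [cob, augmentation, cob_zero]
    · exact ih _ (by simp at h; omega) u rfl
    · rw [augmentation_cons a b, sub_self]

theorem block_nonempty_of_augmentation_ne_zero {u : List (Option (Fin 3))}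
    (h : augmentation u ≠ 0) (i : ℕ) (hi : i ≤ u.count none) : (block u i).Nonempty := by
  fun_induction augmentation u generalizing i with
  | case1 =>
    obtain rfl : i = 0 := by simpa using hi
    simp [block]
  | case2 _ u ih =>
    cases i with
    | zero => simp [block]
    | succ i => exact ih h i (by simpa using hi)
  | case3 => simp at h

theorem eval_augmentation (n : ℕ) : eval n 0 augmentation = 1 := by
  suffices h : awEval n [0] augmentation = 1 by simpa [eval, barEval] using h
  induction n with
  | zero => simp [awEval, augmentation]
  | succ n ih => simpa [awEval, augmentation] using ih

open Classical in
theorem exists_augmentation (n d : ℕ) : ∃ c : List (Option (Fin 3)) → ZMod 3,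
    (∀ u, ¬ Good n d u → c u = 0) ∧ (∀ u, Good n d u → cob Option.isSome u c = 0) ∧
    (∀ u, c (rot u) = c u) ∧ eval n 0 c = 1 := by
  refine ⟨fun u => if Good n d u then augmentation u else 0, fun u hu => by simp [hu],
    fun u hu => ?_, fun u => by simp only [good_rot_iff, augmentation_rot], ?_⟩
  · refine (cob_congr _ _ _ augmentation fun l a r ha e => ?_).trans (cob_augmentation u)
    obtain ⟨t, rfl⟩ := Option.isSome_iff_exists.1 ha
    subst e
    split_ifs with hg
    · rfl
    · by_contra h
      have hc : (l ++ r).count none = n := by simpa using hu.count_eq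
      exact hg ⟨hc, fun i hi =>
        block_nonempty_of_augmentation_ne_zero (Ne.symm h) i (hc.symm ▸ hi),
        (jumps_delete_le l r t).trans hu.jumps_le⟩
  · rw [← eval_augmentation n]
    exact eval_congr n 0 d (Nat.zero_le _) _ _ fun u hu => by simp [hu]

/-- A cochain agreeing near `u` with a cocycle has zero coboundary at `u`, where the comparison is
only needed for words with the same rank and label as `u`. -/
theorem cob_eq_zero_of_label {n d N e : ℕ} {ρ : List (Option (Fin 3)) → ℕ}
    {lam : List (Option (Fin 3)) → Fin 3}
    (hf : ∀ l r t, Good n d (l ++ some t :: r) → Good n d (l ++ r) →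
      ρ (l ++ some t :: r) ≤ ρ (l ++ r) ∧
        (ρ (l ++ r) = ρ (l ++ some t :: r) → lam (l ++ r) = lam (l ++ some t :: r)))
    {W V : List (Option (Fin 3)) → ZMod 3} {u : List (Option (Fin 3))} (hu : Good n d u)
    (hW : ∀ v, (Good n d v → N ≤ ρ v + e) → W v = 0)
    (hV : ∀ v, (Good n d v → N ≤ ρ v + e) → V v = 0)
    (h : ∀ v, lam v = lam u → W v = V v) (hc : cob Option.isSome u V = 0)
    (hr : N ≤ ρ u + e + 1) : cob Option.isSome u W = 0 := by
  rw [← hc]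
  refine cob_congr _ _ _ _ fun l a r ha e' => ?_
  obtain ⟨t, rfl⟩ := Option.isSome_iff_exists.1 ha
  subst e'
  by_cases hg : Good n d (l ++ r)
  · obtain ⟨h₁, h₂⟩ := hf l r t hu hg
    rcases h₁.eq_or_lt with h₁ | h₁
    · exact h _ (h₂ h₁.symm)
    · rw [hW _ fun _ => by omega, hV _ fun _ => by omega]
  · rw [hW _ fun h => absurd h hg, hV _ fun h => absurd h hg]

/-- Lowering the support of an invariant cocycle by two ranks preserves its evaluation. -/
theorem exists_lowered_cocycle {n d N e k : ℕ} (hk : Even k) (hkd : k + 2 ≤ d)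
    {ρ : List (Option (Fin 3)) → ℕ} {lam : List (Option (Fin 3)) → Fin 3}
    (hρ : ∀ u, Good n d u → ρ (rot u) = ρ u)
    (hlam : ∀ u, Good n d u → lam (rot u) = lam u + 1)
    (hf : ∀ l r t, Good n d (l ++ some t :: r) → Good n d (l ++ r) →
      ρ (l ++ some t :: r) ≤ ρ (l ++ r) ∧
        (ρ (l ++ r) = ρ (l ++ some t :: r) → lam (l ++ r) = lam (l ++ some t :: r)))
    {c : List (Option (Fin 3)) → ZMod 3} (hc : ∀ u, (Good n d u → N ≤ ρ u + e) → c u = 0)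
    (hcc : ∀ u, Good n d u → cob Option.isSome u c = 0) (hcr : ∀ u, c (rot u) = c u) :
    ∃ c' : List (Option (Fin 3)) → ZMod 3, (∀ u, (Good n d u → N ≤ ρ u + (e + 2)) → c' u = 0) ∧
      (∀ u, Good n d u → cob Option.isSome u c' = 0) ∧ (∀ u, c' (rot u) = c' u) ∧
      eval n (k + 2) c' = eval n k c := by
  have supp : ∀ {e : ℕ} {W : List (Option (Fin 3)) → ZMod 3},
      (∀ u, (Good n d u → N ≤ ρ u + e) → W u = 0) → ∀ u, ¬ Good n d u → W u = 0 :=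
    fun h u hu => h u fun h' => absurd h' hu
  have hrot : ∀ {e : ℕ} {W : List (Option (Fin 3)) → ZMod 3},
      (∀ u, (Good n d u → N ≤ ρ u + e) → W u = 0) →
      ∀ u, (Good n d u → N ≤ ρ u + e) → W (rot u) = 0 := fun h u hu => h _ fun hg => by
    rw [good_rot_iff] at hg
    rw [hρ u hg]
    exact hu hg
  have hcob : ∀ (W : List (Option (Fin 3)) → ZMod 3) u,
      cob Option.isSome (rot u) W = cob Option.isSome u fun v => W (rot v) := fun W u =>
    cob_map _ _ (by simp) u W
  -- the part of the cocycle carried by the label `0`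
  set W : List (Option (Fin 3)) → ZMod 3 := fun u => if lam u = 0 then c u else 0 with hWdef
  have hW : ∀ u, (Good n d u → N ≤ ρ u + e) → W u = 0 := fun u hu => by simp [hWdef, hc u hu]
  have hWsum : ∀ u, W u + W (rot u) + W (rot (rot u)) = c u := fun u => by
    by_cases hu : Good n d u
    · simp only [hWdef, hcr, hlam _ hu, hlam _ hu.rot]
      generalize lam u = a
      fin_cases a <;> simp
    · simp [hWdef, hcr, supp hc u hu]
  set c₁ := coboundary n d W with hc₁def
  have hc₁ : ∀ u, (Good n d u → N ≤ ρ u + (e + 1)) → c₁ u = 0 := fun u hu => by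
    by_cases hg : Good n d u
    · rw [hc₁def, coboundary, if_pos hg]
      by_cases hl : lam u = 0
      · exact cob_eq_zero_of_label hf hg hW hc (fun v hv => by simp [hWdef, hv, hl]) (hcc u hg)
          (hu hg)
      · exact cob_eq_zero_of_label hf hg hW (V := fun _ => 0) (fun _ _ => rfl)
          (fun v hv => by simp [hWdef, hv, hl]) (cob_zero _ _) (hu hg)
    · simp [hc₁def, coboundary, hg]
  have hc₁c : ∀ u, Good n d u → cob Option.isSome u c₁ = 0 := fun u hu =>
    cob_coboundary (supp hW) hu
  have hc₁sum : ∀ u, c₁ u + c₁ (rot u) + c₁ (rot (rot u)) = 0 := fun u => by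
    by_cases hg : Good n d u
    · simp only [hc₁def, coboundary, if_pos hg, if_pos hg.rot, if_pos hg.rot.rot, hcob,
        ← cob_add, hWsum]
      exact hcc u hg
    · simp [hc₁def, coboundary, good_rot_iff, hg]
  set W₁ : List (Option (Fin 3)) → ZMod 3 := fun u =>
    if lam u = 1 then c₁ (rot (rot u)) else if lam u = 2 then -c₁ u else 0 with hW₁def
  have hW₁ : ∀ u, (Good n d u → N ≤ ρ u + (e + 1)) → W₁ u = 0 := fun u hu => by
    simp [hW₁def, hc₁ u hu, hrot (hrot hc₁) u hu]
  have hW₁sub : ∀ u, W₁ (rot u) = W₁ u + c₁ u := fun u => by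
    by_cases hu : Good n d u
    · simp only [hW₁def, hlam _ hu, rot_rot_rot]
      have := hc₁sum u
      generalize lam u = a
      fin_cases a
      · simp
      · simp
        linear_combination -this
      · simp
    · have h₁ := supp hc₁ u hu
      have h₂ := supp hW₁ u hu
      have h₃ := supp hW₁ (rot u) (by rwa [good_rot_iff])
      rw [h₁, h₂, h₃, add_zero]
  have hc₂ : ∀ u, (Good n d u → N ≤ ρ u + (e + 2)) → coboundary n d W₁ u = 0 := fun u hu => by
    by_cases hg : Good n d u
    · rw [coboundary, if_pos hg]
      by_cases hl : lam u = 1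
      · exact cob_eq_zero_of_label hf hg hW₁ (hrot (hrot hc₁))
          (fun v hv => by simp [hW₁def, hv, hl])
          (by rw [← hcob (fun v => c₁ (rot v)), ← hcob]; exact hc₁c _ hg.rot.rot) (hu hg)
      by_cases hl' : lam u = 2
      · exact cob_eq_zero_of_label hf hg hW₁ (V := fun v => -c₁ v)
          (fun v hv => by rw [hc₁ v hv, neg_zero]) (fun v hv => by simp [hW₁def, hv, hl'])
          (by rw [cob_neg, hc₁c u hg, neg_zero]) (hu hg)
      · exact cob_eq_zero_of_label hf hg hW₁ (V := fun _ => 0) (fun _ _ => rfl)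
          (fun v hv => by simp [hW₁def, hv, hl, hl']) (cob_zero _ _) (hu hg)
    · simp [coboundary, hg]
  refine ⟨coboundary n d W₁, hc₂, fun u hu => cob_coboundary (supp hW₁) hu, fun u => ?_, ?_⟩
  · by_cases hg : Good n d u
    · simp only [coboundary, if_pos hg, if_pos hg.rot, hcob, hW₁sub, cob_add, hc₁c u hg,
        add_zero]
    · simp [coboundary, good_rot_iff, hg]
  · have hodd : ¬ Even (k + 1) := by simpa using hk.add_one
    rw [eval_coboundary hkd (supp hW₁), if_neg hodd]
    have h₁ : eval n (k + 1) (fun u => W₁ (rot u)) =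
        eval n (k + 1) W₁ + (eval n k (fun u => W (rot u)) - eval n k W) := by
      simp only [hW₁sub, eval_add]
      rw [hc₁def, eval_coboundary (by omega) (supp hW), if_pos hk]
    have h₂ : eval n (k + 1) (fun u => W₁ (rot (rot u))) =
        eval n (k + 1) (fun u => W₁ (rot u)) +
          (eval n k (fun u => W (rot (rot u))) - eval n k (fun u => W (rot u))) := by
      simp only [hW₁sub (rot _), eval_add]
      simp only [hc₁def, coboundary_rot]
      rw [eval_coboundary (by omega) (supp (hrot hW)), if_pos hk]
    have h₃ : eval n k c = eval n k W + eval n k (fun u => W (rot u)) +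
        eval n k (fun u => W (rot (rot u))) := by
      simp only [← eval_add, hWsum]
    rw [h₂, h₁, h₃]
    have h₄ : (3 : ZMod 3) = 0 := by decide
    linear_combination (eval n (k + 1) W₁ - eval n k W) * h₄

theorem not_exists_rank_label {n m : ℕ} {ρ : List (Option (Fin 3)) → ℕ}
    {lam : List (Option (Fin 3)) → Fin 3} (hlt : ∀ u, Good n (2 * m) u → ρ u < 2 * m)
    (hρ : ∀ u, Good n (2 * m) u → ρ (rot u) = ρ u)
    (hlam : ∀ u, Good n (2 * m) u → lam (rot u) = lam u + 1)
    (hf : ∀ l r t, Good n (2 * m) (l ++ some t :: r) → Good n (2 * m) (l ++ r) →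
      ρ (l ++ some t :: r) ≤ ρ (l ++ r) ∧
        (ρ (l ++ r) = ρ (l ++ some t :: r) → lam (l ++ r) = lam (l ++ some t :: r))) : False := by
  have key : ∀ i ≤ m, ∃ c : List (Option (Fin 3)) → ZMod 3,
      (∀ u, (Good n (2 * m) u → 2 * m ≤ ρ u + 2 * i) → c u = 0) ∧
      (∀ u, Good n (2 * m) u → cob Option.isSome u c = 0) ∧ (∀ u, c (rot u) = c u) ∧
      eval n (2 * i) c = 1 := by
    intro i hi
    induction i with
    | zero =>
      obtain ⟨c, h₁, h₂, h₃, h₄⟩ := exists_augmentation n (2 * m)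
      refine ⟨c, fun u hu => h₁ u fun hg => ?_, h₂, h₃, h₄⟩
      have := hlt u hg
      have := hu hg
      omega
    | succ i ih =>
      obtain ⟨c, h₁, h₂, h₃, h₄⟩ := ih (by omega)
      obtain ⟨c', h₁', h₂', h₃', h₄'⟩ :=
        exists_lowered_cocycle (even_two_mul i) (by omega) hρ hlam hf h₁ h₂ h₃
      exact ⟨c', h₁', h₂', h₃', h₄'.trans h₄⟩
  obtain ⟨c, h₁, -, -, h₄⟩ := key m le_rfl
  have h₅ := eval_congr n (2 * m) (2 * m) le_rfl c (fun u => c u - c u)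
    fun u _ => by rw [sub_self]; exact h₁ u fun _ => Nat.le_add_left _ _
  rw [eval_sub, sub_self, h₄] at h₅
  exact one_ne_zero h₅

end Obstruction

section Splitting

theorem sum_card_block_le (k : ℕ) : ∀ u : List (Option (Fin 3)),
    ∑ i ∈ Finset.range k, (block u i).card ≤ k + jumps u.reduceOption
  | [] => by simp [block]
  | none :: u => by
    cases k with
    | zero => simp
    | succ k =>
      have := sum_card_block_le k u
      simp [Finset.sum_range_succ', block]
      omega
  | [some t] => by
    cases k with
    | zero => simp
    | succ k => simp [Finset.sum_range_succ', block]; omega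
  | some t :: none :: u => by
    cases k with
    | zero => simp
    | succ k =>
      have := sum_card_block_le k u
      have := jumps_le_cons t u.reduceOption
      simp [Finset.sum_range_succ', block]
      omega
  | some t :: some s :: u => by
    cases k with
    | zero => simp
    | succ k =>
      have := sum_card_block_le (k + 1) (some s :: u)
      simp only [Finset.sum_range_succ', block, List.reduceOption_cons_of_some, jumps] at this ⊢
      by_cases h : t = s
      · subst h
        simpa using this
      · have := Finset.card_insert_le t (insert s (block u 0))
        simp only [h, if_false]
        omega

/-- The number of blocks of color `j` containing the letter `t`. -/
def blockCount (n : ℕ) (c : ℕ → ℕ) (u : List (Option (Fin 3))) (j : ℕ) (t : Fin 3) : ℕ :=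
  ((Finset.range (n + 1)).filter fun i => c i = j ∧ t ∈ block u i).card

theorem blockCount_rot (n : ℕ) (c : ℕ → ℕ) (u : List (Option (Fin 3))) (j : ℕ) (t : Fin 3) :
    blockCount n c (rot u) j (t + 1) = blockCount n c u j t := by
  simp only [blockCount, add_one_mem_block_rot]

theorem blockCount_mono (n : ℕ) (c : ℕ → ℕ) (l r : List (Option (Fin 3))) (s : Fin 3) (j : ℕ)
    (t : Fin 3) : blockCount n c (l ++ r) j t ≤ blockCount n c (l ++ some s :: r) j t := by
  refine Finset.card_le_card fun i => ?_
  simp only [Finset.mem_filter]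
  exact fun ⟨h₁, h₂, h₃⟩ => ⟨h₁, h₂, block_subset l r s i h₃⟩

theorem sum_blockCount_le {n d : ℕ} (c : ℕ → ℕ) {u : List (Option (Fin 3))} (hu : Good n d u)
    (j : ℕ) : ∑ t, blockCount n c u j t ≤
      ((Finset.range (n + 1)).filter fun i => c i = j).card + d := by
  have h₁ : ∑ t, blockCount n c u j t =
      ∑ i ∈ (Finset.range (n + 1)).filter (fun i => c i = j), (block u i).card := by
    simp only [blockCount, ← Finset.filter_filter, Finset.card_filter (fun i => _ ∈ block u i)]
    rw [Finset.sum_comm]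
    simp
  have h₂ := sum_card_block_le (n + 1) u
  rw [← Finset.sum_filter_add_sum_filter_not _ (fun i => c i = j)] at h₂
  have h₃ := Finset.card_nsmul_le_sum ((Finset.range (n + 1)).filter fun i => ¬ c i = j)
    (fun i => (block u i).card) 1 fun i hi =>
      (hu.nonempty i (by simp at hi; omega)).card_pos
  have h₄ := Finset.card_filter_add_card_filter_not (s := Finset.range (n + 1)) (fun i => c i = j)
  have h₅ := hu.jumps_le
  simp at h₃ h₄
  omega

/-- The letters contained in too many blocks of color `j`. -/
def excess (n d : ℕ) (c : ℕ → ℕ) (u : List (Option (Fin 3))) (j : ℕ) : Finset (Fin 3) :=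
  Finset.univ.filter fun t =>
    ((Finset.range (n + 1)).filter fun i => c i = j).card + d < 3 * blockCount n c u j t

theorem excess_rot (n d : ℕ) (c : ℕ → ℕ) (u : List (Option (Fin 3))) (j : ℕ) :
    excess n d c (rot u) j = (excess n d c u j).image (· + 1) := by
  ext t
  obtain ⟨t, rfl⟩ : ∃ s, t = s + 1 := ⟨t - 1, by simp⟩
  simp [excess, blockCount_rot]

theorem excess_mono (n d : ℕ) (c : ℕ → ℕ) (l r : List (Option (Fin 3))) (s : Fin 3) (j : ℕ) :
    excess n d c (l ++ r) j ⊆ excess n d c (l ++ some s :: r) j := by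
  intro t
  have := blockCount_mono n c l r s j t
  simp only [excess, Finset.mem_filter, Finset.mem_univ, true_and]
  omega

theorem card_excess_le {n d : ℕ} (c : ℕ → ℕ) {u : List (Option (Fin 3))} (hu : Good n d u)
    (j : ℕ) : (excess n d c u j).card ≤ 2 := by
  have hlt := (Finset.card_le_univ (excess n d c u j))
  have h := sum_blockCount_le c hu j
  by_contra hc
  have h₃ : (excess n d c u j) = Finset.univ := by
    rw [← Finset.card_eq_iff_eq_univ]
    simp at hlt ⊢
    omega
  have h₄ : ∀ t, t ∈ excess n d c u j := by simp [h₃]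
  have h₀ := h₄ 0
  have h₁ := h₄ 1
  have h₂ := h₄ 2
  simp only [excess, Finset.mem_filter, Finset.mem_univ, true_and] at h₀ h₁ h₂
  rw [Fin.sum_univ_three] at h
  omega

theorem card_nsmul_sum_image_add_one : ∀ T : Finset (Fin 3), T.Nonempty → T.card ≤ 2 →
    (T.image (· + 1)).card • ∑ t ∈ T.image (· + 1), t = T.card • ∑ t ∈ T, t + 1 := by
  decide

theorem exists_good_forall_blockCount_le {n m : ℕ} (c : ℕ → ℕ) (hc : ∀ i ≤ n, c i < m) :
    ∃ u, Good n (2 * m) u ∧ ∀ j t, 3 * blockCount n c u j t ≤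
      ((Finset.range (n + 1)).filter fun i => c i = j).card + 2 * m := by
  by_contra! hcon
  have hne : ∀ u, Good n (2 * m) u → ∃ j, (excess n (2 * m) c u j).Nonempty := fun u hu => by
    obtain ⟨j, t, h⟩ := hcon u hu
    exact ⟨j, t, by simpa [excess] using h⟩
  set J : List (Option (Fin 3)) → ℕ := fun u => sInf {j | (excess n (2 * m) c u j).Nonempty}
    with hJ
  have hJmem : ∀ u, Good n (2 * m) u → (excess n (2 * m) c u (J u)).Nonempty := fun u hu =>
    Nat.sInf_mem (hne u hu)
  have hJm : ∀ u, Good n (2 * m) u → J u < m := fun u hu => by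
    obtain ⟨t, ht⟩ := hJmem u hu
    simp only [excess, Finset.mem_filter, Finset.mem_univ, true_and] at ht
    have hpos : 0 < blockCount n c u (J u) t := by omega
    obtain ⟨i, hi⟩ := Finset.card_pos.1 hpos
    simp only [Finset.mem_filter, Finset.mem_range] at hi
    exact hi.2.1 ▸ hc i (by omega)
  have hJrot : ∀ u, J (rot u) = J u := fun u => by
    simp only [hJ, excess_rot, Finset.image_nonempty]
  have hcard : ∀ u, (excess n (2 * m) c (rot u) (J u)).card = (excess n (2 * m) c u (J u)).card :=
    fun u => by rw [excess_rot, Finset.card_image_of_injective _ (add_left_injective 1)]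
  refine not_exists_rank_label (n := n) (m := m)
    (ρ := fun u => 2 * J u + (2 - (excess n (2 * m) c u (J u)).card))
    (lam := fun u => (excess n (2 * m) c u (J u)).card • ∑ t ∈ excess n (2 * m) c u (J u), t)
    (fun u hu => ?_) (fun u hu => ?_) (fun u hu => ?_) fun l r t hu hu' => ?_
  · have := hJm u hu
    have := (hJmem u hu).card_pos
    omega
  · simp only [hJrot, hcard]
  · simp only [hJrot, excess_rot]
    exact card_nsmul_sum_image_add_one _ (hJmem u hu) (card_excess_le c hu _)
  · have hle : J (l ++ some t :: r) ≤ J (l ++ r) :=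
      Nat.sInf_le ((hJmem _ hu').mono (excess_mono n (2 * m) c l r t _))
    have h₁ := (hJmem _ hu).card_pos
    have h₂ := (hJmem _ hu').card_pos
    have h₃ := card_excess_le c hu (J (l ++ some t :: r))
    have h₄ := card_excess_le c hu' (J (l ++ r))
    have hsub := excess_mono n (2 * m) c l r t (J (l ++ r))
    have hcle := Finset.card_le_card hsub
    rcases hle.eq_or_lt with he | hlt
    · simp only [he] at h₁ h₃ ⊢
      refine ⟨by omega, fun h => ?_⟩
      rw [Finset.eq_of_subset_of_card_le hsub (by omega)]
    · exact ⟨by omega, fun h => by omega⟩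

end Splitting

section Rounding

theorem exists_rounding {ι : Type*} [Fintype ι] (s : ι → Finset (Fin 3)) (w : Finset (Fin 3))
    (hw : w.card = Fintype.card ι % 3)
    (h : ∀ A : Finset ι, 3 * A.card ≤ (A.biUnion s).card * Fintype.card ι) :
    ∃ f : ι → Fin 3, (∀ i, f i ∈ s i) ∧
      ∀ t, (Finset.univ.filter fun i => f i = t).card =
        Fintype.card ι / 3 + if t ∈ w then 1 else 0 := by
  set a := Fintype.card ι with ha
  set q : Fin 3 → ℕ := fun t => a / 3 + if t ∈ w then 1 else 0 with hq
  have hsum : ∀ N : Finset (Fin 3), ∑ t ∈ N, q t = N.card * (a / 3) + (N ∩ w).card := fun N => by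
    simp [hq, Finset.sum_add_distrib]
  obtain ⟨g, hg, hgs⟩ := (Finset.all_card_le_biUnion_card_iff_exists_injective
    fun i => (s i).sigma fun t => Finset.range (q t)).1 fun A => by
      have hbu : (A.biUnion fun i => (s i).sigma fun t => Finset.range (q t)) =
          (A.biUnion s).sigma fun t => Finset.range (q t) := by
        ext ⟨t, k⟩
        simp only [Finset.mem_biUnion, Finset.mem_sigma]
        exact ⟨fun ⟨i, hi, h₁, h₂⟩ => ⟨⟨i, hi, h₁⟩, h₂⟩, fun ⟨⟨i, hi, h₁⟩, h₂⟩ => ⟨i, hi, h₁, h₂⟩⟩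
      rw [hbu, Finset.card_sigma]
      simp only [Finset.card_range, hsum]
      have h₁ := h A
      set N := A.biUnion s
      have h₂ := Finset.card_union_add_card_inter N w
      have h₃ := Finset.card_le_univ (N ∪ w)
      have h₄ := Finset.card_le_univ N
      simp only [Fintype.card_fin] at h₃ h₄
      generalize N.card = k at *
      interval_cases k <;> omega
  have hle : ∀ t, (Finset.univ.filter fun i => (g i).1 = t).card ≤ q t := fun t => by
    rw [← Finset.card_range (q t)]
    refine Finset.card_le_card_of_injOn (fun i => (g i).2) (fun i hi => ?_) fun i hi i' hi' e => ?_
    · obtain rfl : (g i).1 = t := by simpa using hi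
      exact (Finset.mem_sigma.1 (hgs i)).2
    · have h₁ : (g i).1 = t := by simpa using hi
      have h₂ : (g i').1 = t := by simpa using hi'
      exact hg (Sigma.ext (h₁.trans h₂.symm) (heq_of_eq e))
  refine ⟨fun i => (g i).1, fun i => (Finset.mem_sigma.1 (hgs i)).1, fun t => ?_⟩
  refine (Finset.sum_eq_sum_iff_of_le fun t _ => hle t).1 ?_ t (Finset.mem_univ t)
  rw [hsum, Finset.univ_inter, hw, ← Finset.card_eq_sum_card_fiberwise fun _ _ => Finset.mem_univ _,
    Finset.card_univ, ← ha, Finset.card_univ, Fintype.card_fin]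
  omega

theorem exists_word_supports {n m : ℕ} (hn : 0 < n) (c : Fin n → Fin m) :
    ∃ (u : List (Option (Fin 3))) (M : ℕ) (s : Fin n → Finset (Fin 3)),
      jumps u.reduceOption ≤ 2 * m ∧
      (∀ i, ∀ t ∈ s i, ∃ k, k / M = i ∧ t ∈ block u k) ∧
      ∀ (j : Fin m) (A : Finset (Fin n)), (∀ i ∈ A, c i = j) →
        3 * A.card ≤ (A.biUnion s).card * (Finset.univ.filter fun i => c i = j).card := by
  classical
  set M := 6 * m + 1 with hM
  have hMpos : 0 < M := by omega
  have hnM : n * M - 1 + 1 = n * M := Nat.sub_add_cancel (Nat.mul_pos hn hMpos)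
  have hlt : ∀ {k}, k < n * M ↔ k / M < n := (Nat.div_lt_iff_lt_mul hMpos).symm
  have hm : 0 < m := (Nat.zero_le _).trans_lt (c ⟨0, hn⟩).2
  obtain ⟨u, hu, hcount⟩ := exists_good_forall_blockCount_le (n := n * M - 1) (m := m)
    (fun k => if h : k / M < n then (c ⟨k / M, h⟩ : ℕ) else 0) fun k _ => by
      split_ifs
      exacts [Fin.is_lt _, hm]
  refine ⟨u, M, fun i => Finset.univ.filter fun t => ∃ k, k / M = i ∧ t ∈ block u k,
    hu.jumps_le, fun i t ht => by simpa using ht, fun j A hA => ?_⟩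
  simp only [hnM, blockCount] at hcount
  have hfib : ∀ A : Finset (Fin n),
      ((Finset.range (n * M)).filter fun k => ∃ i ∈ A, k / M = i).card = M * A.card := fun A => by
    have : ((Finset.range (n * M)).filter fun k => ∃ i ∈ A, k / M = i) =
        A.biUnion fun i => Finset.Ico (i * M) ((i + 1) * M) := by
      ext k
      simp only [Finset.mem_filter, Finset.mem_range, Finset.mem_biUnion, Finset.mem_Ico, hlt,
        ← Nat.le_div_iff_mul_le hMpos, ← Nat.div_lt_iff_lt_mul hMpos]
      constructor
      · rintro ⟨-, i, hi, e⟩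
        exact ⟨i, hi, by omega, by omega⟩
      · rintro ⟨i, hi, h₁, h₂⟩
        exact ⟨by omega, i, hi, by omega⟩
    rw [this, Finset.card_biUnion]
    · simp [Nat.add_mul, mul_comm]
    · intro i _ i' _ hne
      rw [Function.onFun, Finset.disjoint_left]
      intro k
      simp only [Finset.mem_Ico, ← Nat.le_div_iff_mul_le hMpos, ← Nat.div_lt_iff_lt_mul hMpos]
      omega
  have hcol : ((Finset.range (n * M)).filter fun k =>
      (if h : k / M < n then (c ⟨k / M, h⟩ : ℕ) else 0) = j).card =
        M * (Finset.univ.filter fun i => c i = j).card := by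
    rw [← hfib]
    congr 1
    ext k
    simp only [Finset.mem_filter, Finset.mem_range, hlt, Finset.mem_univ, true_and]
    refine and_congr_right fun hk => ?_
    rw [dif_pos hk, Fin.val_inj]
    exact ⟨fun h => ⟨_, h, rfl⟩, fun ⟨i, hi, e⟩ => by
      obtain rfl : i = ⟨k / M, hk⟩ := Fin.ext e.symm
      exact hi⟩
  set N := A.biUnion fun i : Fin n => Finset.univ.filter fun t => ∃ k, k / M = i ∧ t ∈ block u k
    with hN
  have h₁ : M * A.card ≤ ∑ t ∈ N, ((Finset.range (n * M)).filter fun k =>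
      (if h : k / M < n then (c ⟨k / M, h⟩ : ℕ) else 0) = j ∧ t ∈ block u k).card := by
    rw [← hfib]
    refine (Finset.card_le_card fun k hk => ?_).trans Finset.card_biUnion_le
    simp only [Finset.mem_filter, Finset.mem_range] at hk
    obtain ⟨hk, i, hi, e⟩ := hk
    obtain ⟨t, ht⟩ := hu.nonempty k (by omega)
    have hk' := hlt.1 hk
    simp only [Finset.mem_biUnion, Finset.mem_filter, Finset.mem_range, hN, Finset.mem_univ,
      true_and]
    refine ⟨t, ⟨i, hi, k, e, ht⟩, hk, ?_, ht⟩
    obtain rfl : i = ⟨k / M, hk'⟩ := Fin.ext e.symm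
    rw [dif_pos hk', hA _ hi]
  have h₂ := Finset.sum_le_card_nsmul N (fun t => 3 * ((Finset.range (n * M)).filter fun k =>
      (if h : k / M < n then (c ⟨k / M, h⟩ : ℕ) else 0) = j ∧ t ∈ block u k).card) _
    fun t _ => hcount j t
  rw [← Finset.mul_sum, hcol, smul_eq_mul] at h₂
  have h₃ := Finset.card_le_univ N
  simp only [Fintype.card_fin] at h₃
  have h₄ : N.card * (2 * m) ≤ 3 * (2 * m) := Nat.mul_le_mul_right _ h₃
  by_contra! h₅
  have h₆ := Nat.mul_le_mul_left M (Nat.succ_le_of_lt h₅)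
  rw [Nat.succ_eq_add_one] at h₆
  nlinarith

theorem map_snd_sublist_reduceOption (u : List (Option (Fin 3))) (L : List (ℕ × Fin 3))
    (hL : L.Pairwise fun x y => x.1 < y.1) (h : ∀ x ∈ L, x.2 ∈ block u x.1) :
    (L.map Prod.snd).Sublist u.reduceOption := by
  induction u generalizing L with
  | nil =>
    rcases L with - | ⟨x, L⟩
    · simp
    · simpa [block] using h x (by simp)
  | cons a u ih =>
    cases a with
    | none =>
      have hpos : ∀ x ∈ L, x.1 ≠ 0 := fun x hx e => by simpa [e, block] using h x hx
      have := ih (L.map fun x => (x.1 - 1, x.2))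
        (List.pairwise_map.2 (hL.imp_of_mem fun {x y} hx _ hxy => by
          have := hpos x hx
          dsimp only
          omega))
        (by
          simp only [List.mem_map, forall_exists_index, and_imp, forall_apply_eq_imp_iff₂]
          intro x hx
          obtain ⟨k, hk⟩ := Nat.exists_eq_succ_of_ne_zero (hpos x hx)
          simpa [hk, block] using h x hx)
      simpa [List.map_map, Function.comp_def] using this
    | some t =>
      rcases L with - | ⟨⟨k, s⟩, L⟩
      · simp
      have hblock : ∀ x : ℕ × Fin 3, x.2 ∈ block (some t :: u) x.1 → x ≠ (0, t) →
          x.2 ∈ block u x.1 := by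
        rintro ⟨- | k, r⟩ hx hne <;> simp_all [block]
      rw [List.reduceOption_cons_of_some]
      obtain ⟨hk, hL'⟩ := List.pairwise_cons.1 hL
      have htail : ∀ x ∈ L, x.2 ∈ block u x.1 := fun x hx =>
        hblock x (h x (List.mem_cons_of_mem _ hx)) fun e => by
          have := hk x hx
          simp [e] at this
      by_cases hks : (k, s) = (0, t)
      · obtain ⟨rfl, rfl⟩ := Prod.mk.inj hks
        exact (ih L hL' htail).cons_cons _
      · refine (ih _ hL fun x hx => ?_).cons _
        rcases List.mem_cons.1 hx with rfl | hx
        · exact hblock _ (h _ (by simp)) hks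
        · exact htail x hx

theorem card_cuts_eq_jumps {α : Type*} [DecidableEq α] {n : ℕ} (f : Fin n → α) :
    Nat.card {i : Fin n // ∃ h : (i : ℕ) + 1 < n, f i ≠ f ⟨(i : ℕ) + 1, h⟩} =
      jumps (List.ofFn f) := by
  classical
  rw [Nat.card_eq_fintype_card, Fintype.card_subtype]
  induction n with
  | zero => simp [jumps]
  | succ n ih =>
    rw [Fin.card_filter_univ_succ']
    cases n with
    | zero =>
      rw [if_neg fun ⟨h, _⟩ => lt_irrefl _ h, Finset.univ_eq_empty, Finset.filter_empty]
      simp [jumps]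
    | succ n =>
      have := ih fun i => f i.succ
      rw [List.ofFn_succ, List.ofFn_succ, jumps]
      rw [List.ofFn_succ] at this
      rw [← this]
      congr 1
      · have h : (∃ h : ((0 : Fin (n + 2)) : ℕ) + 1 < n + 1 + 1,
            f 0 ≠ f ⟨((0 : Fin (n + 2)) : ℕ) + 1, h⟩) ↔ f 0 ≠ f (Fin.succ 0) :=
          ⟨fun ⟨_, h⟩ => h, fun h => ⟨Nat.succ_lt_succ (Nat.succ_pos n), h⟩⟩
        rw [if_congr h rfl rfl, ite_not]
      · simp [Fin.succ]

end Rounding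

end Necklace

theorem necklace_advantage_three (n m : ℕ) (c : Fin n → Fin m)
    (a : Fin m → ℕ) (ha : ∀ j, a j = Nat.card {i : Fin n // c i = j})
    (w : Fin m → Finset (Fin 3)) (hw : ∀ j, (w j).card = a j % 3) :
    ∃ f : Fin n → Fin 3,
      Nat.card {i : Fin n // ∃ h : (i : ℕ) + 1 < n, f i ≠ f ⟨(i : ℕ) + 1, h⟩} ≤ 2 * m ∧
      ∀ (j : Fin m) (t : Fin 3),
        Nat.card {i : Fin n // c i = j ∧ f i = t} =
          a j / 3 + if t ∈ w j then 1 else 0 := by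
  classical
  obtain ⟨f, M, u, hu, hf, hcard⟩ : ∃ (f : Fin n → Fin 3) (M : ℕ) (u : List (Option (Fin 3))),
      Necklace.jumps u.reduceOption ≤ 2 * m ∧
      (∀ i : Fin n, ∃ k : ℕ, k / M = i ∧ f i ∈ Necklace.block u k) ∧ ∀ (j : Fin m) (t : Fin 3),
        Nat.card {i : Fin n // c i = j ∧ f i = t} =
          a j / 3 + if t ∈ w j then 1 else 0 := by
    have ha' : ∀ j, a j = Fintype.card {i : Fin n // c i = j} := fun j => by
      rw [ha, Nat.card_eq_fintype_card]
    rcases Nat.eq_zero_or_pos n with rfl | hn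
    · have hz : ∀ j, a j = 0 := fun j => by simp [ha]
      refine ⟨fun _ => 0, 1, [], by simp [Necklace.jumps], fun i => i.elim0, fun j t => ?_⟩
      have := hw j
      simp_all
    · obtain ⟨u, M, s, hu, hs, hA⟩ := Necklace.exists_word_supports hn c
      have key := fun j => Necklace.exists_rounding (fun i : {i : Fin n // c i = j} => s i) (w j)
        ((hw j).trans (by rw [ha'])) fun A => by
          have := hA j (A.map (Function.Embedding.subtype _)) fun i hi => by
            obtain ⟨x, -, rfl⟩ := Finset.mem_map.1 hi
            exact x.2
          rw [Finset.card_map, Finset.map_eq_image, Finset.image_biUnion] at this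
          rwa [Fintype.card_subtype]
      choose g hg hgcard using key
      refine ⟨fun i => g (c i) ⟨i, rfl⟩, M, u, hu, fun i => hs i _ (hg _ ⟨i, rfl⟩), fun j t => ?_⟩
      rw [ha', ← hgcard j t, ← Fintype.card_subtype, ← Nat.card_eq_fintype_card]
      refine Nat.card_congr ⟨fun i => ⟨⟨i, i.2.1⟩, ?_⟩, fun i => ⟨i.1, i.1.2, ?_⟩,
        fun _ => rfl, fun _ => rfl⟩
      · obtain ⟨i, rfl, h⟩ := i
        exact h
      · obtain ⟨⟨i, rfl⟩, h⟩ := i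
        exact h
  refine ⟨f, ?_, hcard⟩
  choose e he hef using hf
  rw [Necklace.card_cuts_eq_jumps]
  refine (Necklace.jumps_le_of_sublist ?_).trans hu
  have := Necklace.map_snd_sublist_reduceOption u (List.ofFn fun i => (e i, f i))
    (List.pairwise_ofFn.2 fun i i' hii => ?_) (by simpa [List.mem_ofFn] using hef)
  · simpa [List.map_ofFn, Function.comp_def] using this
  · by_contra! hle
    have := Nat.div_le_div_right (c := M) hle
    rw [he, he] at this
    exact absurd hii (by simpa using this)
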